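/- arXiv:2210.12128 — 2 statements merged into one kernel-verified Lean document; each statement's English description precedes it below -/
import Mathlib

section
/- Let A be a d × K matrix with nonnegative integer entries, every column of A nonzero, and with each standard basis vector e_1, …, e_d of ℕ^d appearing as a column of A. Let c be the j-th column of A, and suppose c_k > 0 for some index 1 ≤ k ≤ d. Let E be the matrix obtained from A by replacing its j-th column by the standard basis vector e_k. Then for every b ∈ ℕ^d, the number of x ∈ ℕ^K with E x = b is at least the number of x ∈ ℕ^K with A x = b. -/
/-!
Write the `j`-th column of `A` as `c + A *ᵥ v`, where `c` is the new column. If `c ≠ 0`, then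
`v j = 0`, because otherwise `A *ᵥ v` would already dominate the `j`-th column. The transvection
`x ↦ x + x j • v` is therefore injective, and it maps the solutions of `A *ᵥ x = b` to solutions
for the matrix with the new column. When every standard basis vector is a column of `A`, every
vector, in particular `A.col j - c`, has the form `A *ᵥ v`.
-/

open scoped Matrix

theorem col_updateCol {m n R : Type*} [DecidableEq n] (A : Matrix m n R) (j : n) (c : m → R) :
    (A.updateCol j c).col = Function.update A.col j c := by
  ext l i
  obtain rfl | hl := eq_or_ne l j <;> simp [*]

section Semiring

variable {m n R : Type*} [Fintype n]

theorem mulVec_surjective_of_forall_exists_col_eq_single [Finite m] [DecidableEq m] [Semiring R]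
    {A : Matrix m n R} (hA : ∀ i, ∃ l, A.col l = Pi.single i 1) :
    Function.Surjective A.mulVec := by
  classical
  have := Fintype.ofFinite m
  choose s hs using hA
  refine Matrix.mulVec_surjective_iff_exists_right_inverse.mpr
    ⟨(1 : Matrix n n R).submatrix id s, ?_⟩
  ext i i'
  simpa [Matrix.mul_apply, Matrix.one_apply, Pi.single_apply] using congrFun (hs i') i

theorem updateCol_mulVec_of_apply_eq_zero [DecidableEq n] [NonUnitalNonAssocSemiring R]
    (A : Matrix m n R) {j : n} (c : m → R) {x : n → R} (hx : x j = 0) :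
    A.updateCol j c *ᵥ x = A *ᵥ x := by
  ext i
  simp only [Matrix.mulVec, dotProduct]
  refine Finset.sum_congr rfl fun l _ ↦ ?_
  obtain rfl | hl := eq_or_ne l j
  · simp [hx]
  · rw [Matrix.updateCol_ne hl]

variable [DecidableEq n] [CommSemiring R]

theorem updateCol_add_mulVec (A : Matrix m n R) (j : n) (c w : m → R) (x : n → R) :
    A.updateCol j (c + w) *ᵥ x = A.updateCol j c *ᵥ x + x j • w := by
  ext i
  simp only [Matrix.mulVec, dotProduct, Matrix.updateCol_apply, Pi.add_apply, Pi.smul_apply,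
    smul_eq_mul, ite_mul, add_mul, Finset.sum_ite, Finset.sum_add_distrib]
  simp [mul_comm, add_right_comm, Finset.filter_eq']

theorem updateCol_mulVec_add_apply_smul {A : Matrix m n R} {j : n} {c : m → R} {v : n → R}
    (hv : A.col j = c + A *ᵥ v) (hvj : v j = 0) (x : n → R) :
    A.updateCol j c *ᵥ (x + x j • v) = A *ᵥ x :=
  calc A.updateCol j c *ᵥ (x + x j • v)
      = A.updateCol j c *ᵥ x + x j • A *ᵥ v := by
        rw [Matrix.mulVec_add, Matrix.mulVec_smul, updateCol_mulVec_of_apply_eq_zero A c hvj]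
    _ = A.updateCol j (A.col j) *ᵥ x := by rw [hv, updateCol_add_mulVec]
    _ = A *ᵥ x := congrArg (· *ᵥ x) (A.updateCol_eq_self j)

end Semiring

theorem mul_apply_le_mulVec_apply {m n R : Type*} [Fintype n] [NonUnitalNonAssocSemiring R]
    [PartialOrder R] [IsOrderedAddMonoid R] [CanonicallyOrderedAdd R] (A : Matrix m n R)
    (x : n → R) (i : m) (l : n) : A i l * x l ≤ (A *ᵥ x) i :=
  Finset.single_le_sum_of_canonicallyOrdered (f := fun l ↦ A i l * x l) (Finset.mem_univ l)

theorem injective_add_apply_smul {n R : Type*} [NonUnitalNonAssocSemiring R] [IsRightCancelAdd R]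
    {j : n} {v : n → R} (hvj : v j = 0) : Function.Injective fun x : n → R ↦ x + x j • v := by
  intro x y hxy
  have hj : x j = y j := by simpa [hvj] using congrFun hxy j
  simpa [hj] using hxy

section NatMatrix

variable {m n : Type*} [Fintype n] {A : Matrix m n ℕ}

theorem finite_setOf_mulVec_eq (hA : ∀ l, A.col l ≠ 0) (b : m → ℕ) :
    {x | A *ᵥ x = b}.Finite := by
  classical
  choose i hi using fun l ↦ Function.ne_iff.mp (hA l)
  refine (Set.finite_Iic (b ∘ i)).subset ?_
  rintro x rfl l
  exact (Nat.le_mul_of_pos_left _ (Nat.pos_of_ne_zero (hi l))).trans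
    (mul_apply_le_mulVec_apply A x (i l) l)

theorem apply_eq_zero_of_col_eq_add_mulVec {j : n} {c : m → ℕ} (hc : c ≠ 0) {v : n → ℕ}
    (hv : A.col j = c + A *ᵥ v) : v j = 0 := by
  obtain ⟨i, hi⟩ := Function.ne_iff.mp hc
  by_contra hvj
  have hle : A i j ≤ (A *ᵥ v) i :=
    (Nat.le_mul_of_pos_right _ (Nat.pos_of_ne_zero hvj)).trans (mul_apply_le_mulVec_apply A v i j)
  have hij : A i j = c i + (A *ᵥ v) i := congrFun hv i
  exact hi (show c i = 0 by lia)

theorem column_to_basis_increases_general [DecidableEq n] {j : n} (hA : ∀ l ≠ j, A.col l ≠ 0)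
    {c : m → ℕ} (hc : c ≠ 0) {v : n → ℕ} (hv : A.col j = c + A *ᵥ v) (b : m → ℕ) :
    Nat.card {x // A *ᵥ x = b} ≤ Nat.card {x // A.updateCol j c *ᵥ x = b} := by
  have hvj : v j = 0 := apply_eq_zero_of_col_eq_add_mulVec hc hv
  have hAc : ∀ l, (A.updateCol j c).col l ≠ 0 := by
    rw [col_updateCol]
    exact (Function.forall_update_iff A.col fun _ u ↦ u ≠ 0).mpr ⟨hc, hA⟩
  have : Finite {x // A.updateCol j c *ᵥ x = b} := (finite_setOf_mulVec_eq hAc b).to_subtype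
  exact Nat.card_le_card_of_injective
    (Subtype.map (fun x ↦ x + x j • v) fun x hx ↦
      (updateCol_mulVec_add_apply_smul hv hvj x).trans hx)
    (Subtype.map_injective _ (injective_add_apply_smul hvj))

end NatMatrix

/-- Lemma 6.2: for a matrix `A` with nonnegative integer entries, all columns nonzero, and
every standard basis vector appearing as a column, replacing the `j`-th column of `A` by the
standard basis vector `e_k` supported at a nonzero coordinate `k` of that column can only
increase the vector partition function. -/
theorem column_to_basis_increases (d K : ℕ) (A : Matrix (Fin d) (Fin K) ℕ)
    (hbasis : ∀ i : Fin d, ∃ j : Fin K, (fun i' => A i' j) = Pi.single i 1)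
    (hcol : ∀ j : Fin K, ∃ i : Fin d, A i j ≠ 0)
    (j : Fin K) (k : Fin d) (hk : 0 < A k j)
    (b : Fin d → ℕ) :
    Nat.card {x : Fin K → ℕ // A.mulVec x = b} ≤
      Nat.card {x : Fin K → ℕ // (A.updateCol j (Pi.single k 1)).mulVec x = b} := by
  have hle : Pi.single k 1 ≤ A.col j := update_le_iff.mpr ⟨hk, fun _ _ ↦ Nat.zero_le _⟩
  obtain ⟨v, hv⟩ :=
    mulVec_surjective_of_forall_exists_col_eq_single hbasis (A.col j - Pi.single k 1)
  exact column_to_basis_increases_general (fun l _ ↦ Function.ne_iff.mpr (hcol l))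
    (Pi.single_ne_zero_iff.mpr one_ne_zero) (by rw [hv, add_tsub_cancel_of_le hle]) b
end

section
/- For every b = (b_1, b_2, b_3, b_4) ∈ ℕ⁴, the number of vectors x ∈ ℕ^{21} with A^{2,4} x = b is at most C(b_1 + 8, 8) · C(b_2 + 8, 8) · (b_3 + 1), where C(·,·) denotes a binomial coefficient. -/
/-- The matrix `A^{2,4}` (over `ℕ`). -/
def A24n : Matrix (Fin 4) (Fin 21) ℕ :=
  !![0, 0, 0, 1, 0, 0, 0, 1, 1, 0, 0, 0, 0, 0, 1, 0, 1, 1, 1, 1, 1;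
     0, 0, 1, 0, 0, 1, 1, 0, 0, 1, 1, 1, 1, 1, 1, 1, 1, 1, 2, 2, 2;
     0, 1, 0, 0, 1, 0, 1, 1, 1, 1, 1, 1, 1, 2, 1, 2, 2, 2, 2, 3, 3;
     1, 0, 0, 0, 1, 1, 0, 0, 1, 1, 1, 1, 2, 1, 1, 2, 1, 2, 2, 2, 3]

/-!
Suppose that every unit vector occurs among the columns of a nonnegative integer matrix `A`.
Then a solution of `A x = b` is determined by its coordinates at the other columns. Cover those
columns by sets `T i` such that row `i` has no zero in `T i`: row `i` of the system bounds the sum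
of the coordinates in `T i` by `b i`, which leaves at most `C(b i + #T i, #T i)` choices for them.
For `A^{2,4}`, sorting the other columns by the row of their topmost nonzero entry gives sets `T i`
of sizes `8`, `8`, `1`, `0`.
-/

open Finset Matrix

section StarsAndBars

variable {σ : Type*} [Fintype σ]

/-- The slack variable turning `∑ a, f a ≤ n` into an equation: the value at `none` is the
difference `n - ∑ a, f a`. -/
def sumLEEquivOptionSumEq (n : ℕ) :
    {f : σ → ℕ // ∑ a, f a ≤ n} ≃ {g : Option σ → ℕ // ∑ o, g o = n} where
  toFun f := ⟨fun o => o.elim (n - ∑ a, f.1 a) f.1, by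
    rw [Fintype.sum_option]
    exact Nat.sub_add_cancel f.2⟩
  invFun g := ⟨fun a => g.1 (some a), by
    have sum_eq := g.2
    rw [Fintype.sum_option] at sum_eq
    exact (Nat.le_add_left _ _).trans_eq sum_eq⟩
  left_inv _ := rfl
  right_inv g := by
    have sum_eq := g.2
    rw [Fintype.sum_option] at sum_eq
    ext (_ | a)
    · exact Nat.sub_eq_of_eq_add sum_eq.symm
    · rfl

/-- Stars and bars: families of naturals indexed by `σ` with sum at most `n` correspond to
multisets of size `n` in `Option σ`. -/
noncomputable def sumLEEquivSymOption [DecidableEq σ] (n : ℕ) :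
    {f : σ → ℕ // ∑ a, f a ≤ n} ≃ Sym (Option σ) n :=
  (sumLEEquivOptionSumEq n).trans (Sym.equivNatSumOfFintype (Option σ) n).symm

instance finite_sum_le (n : ℕ) : Finite {f : σ → ℕ // ∑ a, f a ≤ n} := by
  classical exact Finite.of_equiv _ (sumLEEquivSymOption n).symm

theorem card_sum_le (n : ℕ) :
    Nat.card {f : σ → ℕ // ∑ a, f a ≤ n} = (n + Fintype.card σ).choose (Fintype.card σ) := by
  classical
  rw [Nat.card_congr (sumLEEquivSymOption n), Nat.card_eq_fintype_card, Sym.card_sym_eq_choose,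
    Fintype.card_option, Nat.add_right_comm, Nat.add_sub_cancel, Nat.add_comm n,
    Nat.choose_symm_add]

end StarsAndBars

section VectorPartition

variable {κ ι R : Type*} [Fintype ι]

theorem sum_le_mulVec_apply [Semiring R] [PartialOrder R] [CanonicallyOrderedAdd R]
    [IsOrderedRing R] {A : Matrix κ ι R} {i : κ} {s : Finset ι} (hs : ∀ j ∈ s, 1 ≤ A i j)
    (x : ι → R) : ∑ j ∈ s, x j ≤ (A *ᵥ x) i :=
  calc
    ∑ j ∈ s, x j ≤ ∑ j ∈ s, A i j * x j :=
      sum_le_sum fun j hj => le_mul_of_one_le_left zero_le (hs j hj)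
    _ ≤ ∑ j, A i j * x j := sum_le_sum_of_subset (subset_univ s)

variable [DecidableEq κ]

theorem eq_of_mulVec_eq_of_eqOn_compl_range [NonAssocSemiring R] [IsLeftCancelAdd R]
    {A : Matrix κ ι R} {u : κ → ι} (hu : A.submatrix id u = 1) {x y : ι → R}
    (hA : A *ᵥ x = A *ᵥ y) (hxy : Set.EqOn x y (Set.range u)ᶜ) : x = y := by
  classical
  have entry_unit (i k : κ) : A i (u k) = (1 : Matrix κ κ R) i k := congr_fun₂ hu i k
  have mulVec_eq (z : ι → R) (i : κ) :
      (A *ᵥ z) i = ∑ j ∈ univ.erase (u i), A i j * z j + z (u i) := by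
    rw [mulVec, dotProduct, ← sum_erase_add _ _ (mem_univ (u i)), entry_unit, one_apply_eq,
      one_mul]
  have rest_eq (i : κ) : ∑ j ∈ univ.erase (u i), A i j * x j
      = ∑ j ∈ univ.erase (u i), A i j * y j := by
    refine sum_congr rfl fun j hj => ?_
    by_cases hj_range : j ∈ Set.range u
    · obtain ⟨k, rfl⟩ := hj_range
      have hik : i ≠ k := fun h => ne_of_mem_erase hj (congrArg u h.symm)
      rw [entry_unit, one_apply_ne hik, zero_mul, zero_mul]
    · rw [hxy hj_range]
  have unit_eq (i : κ) : x (u i) = y (u i) := by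
    have h := congrFun hA i
    rw [mulVec_eq, mulVec_eq, rest_eq] at h
    exact add_left_cancel h
  funext j
  by_cases hj_range : j ∈ Set.range u
  · obtain ⟨i, rfl⟩ := hj_range
    exact unit_eq i
  · exact hxy hj_range

theorem card_mulVec_eq_le_prod_choose [Fintype κ] {A : Matrix κ ι ℕ} {u : κ → ι}
    (hu : A.submatrix id u = 1) {T : κ → Finset ι} (hT : ∀ i, ∀ j ∈ T i, 1 ≤ A i j)
    (hcover : ∀ j ∉ Set.range u, ∃ i, j ∈ T i) (b : κ → ℕ) :
    Nat.card {x : ι → ℕ // A *ᵥ x = b} ≤ ∏ i, (b i + #(T i)).choose #(T i) := by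
  have sum_le (x : {x : ι → ℕ // A *ᵥ x = b}) (i : κ) : ∑ j : T i, x.1 j ≤ b i := by
    rw [sum_coe_sort, ← congrFun x.2 i]
    exact sum_le_mulVec_apply (hT i) x.1
  let restrict (x : {x : ι → ℕ // A *ᵥ x = b}) (i : κ) : {f : T i → ℕ // ∑ j, f j ≤ b i} :=
    ⟨fun j => x.1 j, sum_le x i⟩
  have restrict_injective : Function.Injective restrict := by
    intro x y hxy
    refine Subtype.ext (eq_of_mulVec_eq_of_eqOn_compl_range hu (x.2.trans y.2.symm) fun j hj => ?_)
    obtain ⟨i, hi⟩ := hcover j hj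
    exact congrFun (congrArg Subtype.val (congrFun hxy i)) ⟨j, hi⟩
  calc
    Nat.card {x : ι → ℕ // A *ᵥ x = b}
      ≤ Nat.card (∀ i, {f : T i → ℕ // ∑ j, f j ≤ b i}) :=
        Nat.card_le_card_of_injective restrict restrict_injective
    _ = ∏ i, (b i + #(T i)).choose #(T i) := by
        simp only [Nat.card_pi, card_sum_le, Fintype.card_coe]

end VectorPartition

/-- Theorem 6.5 for `m = 2, n = 4`: `p_{A^{2,4}}(b) ≤ C(b₁+8, 8) · C(b₂+8, 8) · (b₃+1)`. -/
theorem vpf_24_binomial_bound (b : Fin 4 → ℕ) :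
    Nat.card {x : Fin 21 → ℕ // A24n.mulVec x = b} ≤
      Nat.choose (b 0 + 8) 8 * Nat.choose (b 1 + 8) 8 * (b 2 + 1) := by
  let u : Fin 4 → Fin 21 := ![3, 2, 1, 0]
  let T : Fin 4 → Finset (Fin 21) :=
    ![{7, 8, 14, 16, 17, 18, 19, 20}, {5, 6, 9, 10, 11, 12, 13, 15}, {4}, ∅]
  have unit_columns : A24n.submatrix id u = 1 := by decide
  have one_le_entry : ∀ i, ∀ j ∈ T i, 1 ≤ A24n i j := by
    intro i
    fin_cases i <;> decide
  have cover : ∀ j ∉ Set.range u, ∃ i, j ∈ T i := by decide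
  calc
    Nat.card {x : Fin 21 → ℕ // A24n *ᵥ x = b}
      ≤ ∏ i, (b i + #(T i)).choose #(T i) :=
        card_mulVec_eq_le_prod_choose unit_columns one_le_entry cover b
    _ = (b 0 + 8).choose 8 * (b 1 + 8).choose 8 * (b 2 + 1).choose 1 * (b 3).choose 0 :=
        Fin.prod_univ_four _
    _ = (b 0 + 8).choose 8 * (b 1 + 8).choose 8 * (b 2 + 1) := by
        rw [Nat.choose_one_right, Nat.choose_zero_right, mul_one]
end
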